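/- Let X ⊆ ℝ^n be nonempty, compact and convex and suppose V_α is differentiable with L_1^{V_α}-Lipschitz gradient on X. Let the iterates satisfy x_{k+1} = Π_X[x_k − γ_k(∇V_α(x_k) + e_k)] with x_0 ∈ X, error vectors e_k ∈ ℝ^n, and a non-increasing stepsize sequence with 0 < γ_k ≤ γ_0 < 1/L_1^{V_α}. Then for every k, V_α(x_{k+1}) ≤ V_α(x_k) − (1 − L_1^{V_α}γ_k)(γ_k/4)‖G_{1/γ_0}(x_k)‖² + (1 − (L_1^{V_α}γ_k)/2) γ_k ‖e_k‖². -/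

import Mathlib

/-!
Write `g` for the gradient at `x = x_k`, `d = x_{k+1} - x`, and `D = proj (x - γ_k • g) - x` for the
exact step. The descent lemma (`smooth_descent`) and the variational inequality of the projection
(`proj_variational`) at `x` give `V(x + d) - V(x) ≤ -(1/γ - L/2)‖d‖² - ⟪e, d⟫`. Young's inequality
bounds `-⟪e, d⟫` by `γ/2 ‖e‖² + 1/(2γ) ‖d‖²`, nonexpansiveness of the projection gives
`‖D - d‖ ≤ γ‖e‖`, hence `‖D‖² ≤ 2‖d‖² + 2γ²‖e‖²`, and adding up yields the claim with the residual
taken at stepsize `γ_k`. Finally, `‖x - proj (x - γ • g)‖ / γ` is non-increasing in `γ`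
(`residual_mono`), so the residual at stepsize `γ_0 ≥ γ_k` is no larger.
-/

noncomputable section

section Aux

variable {E : Type*} [NormedAddCommGroup E] [InnerProductSpace ℝ E]

theorem proj_variational {X : Set E} (hX : Convex ℝ X) {z p : E} (hp : p ∈ X)
    (hmin : ∀ w ∈ X, ‖z - p‖ ≤ ‖z - w‖) {w : E} (hw : w ∈ X) :
    inner ℝ (z - p) (w - p) ≤ 0 := by
  have : Nonempty X := ⟨⟨p, hp⟩⟩
  refine (norm_eq_iInf_iff_real_inner_le_zero hX hp).1 (le_antisymm ?_ ?_) w hw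
  · exact le_ciInf fun w => hmin w w.2
  · exact ciInf_le (f := fun w : X => ‖z - w‖)
      ⟨0, by rintro _ ⟨w, rfl⟩; exact norm_nonneg _⟩ ⟨p, hp⟩

theorem proj_nonexpansive {X : Set E} (hX : Convex ℝ X) {proj : E → E}
    (hproj : ∀ z, proj z ∈ X ∧ ∀ w ∈ X, ‖z - proj z‖ ≤ ‖z - w‖) (u v : E) :
    ‖proj u - proj v‖ ≤ ‖u - v‖ := by
  have h1 := proj_variational hX (hproj u).1 (hproj u).2 (hproj v).1
  have h2 := proj_variational hX (hproj v).1 (hproj v).2 (hproj u).1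
  have key : ‖proj u - proj v‖ ^ 2 ≤ inner ℝ (u - v) (proj u - proj v) := by
    rw [← real_inner_self_eq_norm_sq]
    simp only [inner_sub_left, inner_sub_right] at *
    linarith
  have hcs := real_inner_le_norm (u - v) (proj u - proj v)
  by_contra! hlt
  have := norm_nonneg (u - v)
  nlinarith

/-- The scaled length `‖x - proj (x - a • g)‖ / a` of a projected step is non-increasing in the
stepsize `a`. -/
theorem residual_mono {X : Set E} (hX : Convex ℝ X) {proj : E → E}
    (hproj : ∀ z, proj z ∈ X ∧ ∀ w ∈ X, ‖z - proj z‖ ≤ ‖z - w‖) (x g : E) {a b : ℝ}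
    (ha : 0 < a) (hab : a ≤ b) :
    a * ‖x - proj (x - b • g)‖ ≤ b * ‖x - proj (x - a • g)‖ := by
  have hb : 0 < b := ha.trans_le hab
  have h1 := proj_variational hX (hproj (x - a • g)).1 (hproj (x - a • g)).2 (hproj (x - b • g)).1
  have h2 := proj_variational hX (hproj (x - b • g)).1 (hproj (x - b • g)).2 (hproj (x - a • g)).1
  generalize hp : x - proj (x - a • g) = p
  generalize hq : x - proj (x - b • g) = q
  have ep : proj (x - a • g) = x - p := by rw [← hp]; abel
  have eq : proj (x - b • g) = x - q := by rw [← hq]; abel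
  rw [ep, eq] at h1 h2
  have e1 : inner ℝ (x - a • g - (x - p)) (x - q - (x - p))
      = ‖p‖ ^ 2 - inner ℝ p q - a * inner ℝ g (p - q) := by
    rw [show x - a • g - (x - p) = p - a • g by abel, show x - q - (x - p) = p - q by abel,
      inner_sub_left, inner_smul_left, inner_sub_right, real_inner_self_eq_norm_sq]
    simp
  have e2 : inner ℝ (x - b • g - (x - q)) (x - p - (x - q))
      = ‖q‖ ^ 2 - inner ℝ p q + b * inner ℝ g (p - q) := by
    rw [show x - b • g - (x - q) = q - b • g by abel, show x - p - (x - q) = -(p - q) by abel,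
      inner_neg_right, inner_sub_left, inner_smul_left, inner_sub_right,
      real_inner_self_eq_norm_sq, real_inner_comm]
    simp
    ring
  rw [e1] at h1
  rw [e2] at h2
  have hcs := real_inner_le_norm p q
  -- Combining both inequalities with weights `b` and `a` eliminates `g`.
  have key : (b * ‖p‖ - a * ‖q‖) * (‖p‖ - ‖q‖) ≤ 0 := by
    have h1' := mul_nonpos_of_nonneg_of_nonpos hb.le h1
    have h2' := mul_nonpos_of_nonneg_of_nonpos ha.le h2
    have h3 := mul_le_mul_of_nonneg_left hcs (add_pos ha hb).le
    nlinarith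
  by_contra! hlt
  have hpq : ‖q‖ ≤ ‖p‖ := by
    by_contra! h
    have := mul_pos_of_neg_of_neg (sub_neg.2 hlt) (sub_neg.2 h)
    linarith
  have := mul_le_mul_of_nonneg_left hpq ha.le
  have := mul_le_mul_of_nonneg_right hab (norm_nonneg p)
  linarith

theorem smooth_descent [CompleteSpace E] {X : Set E} (hX : Convex ℝ X) {f : E → ℝ} {L : ℝ}
    (hdiff : ∀ z ∈ X, DifferentiableAt ℝ f z)
    (hLip : ∀ u ∈ X, ∀ v ∈ X, ‖gradient f u - gradient f v‖ ≤ L * ‖u - v‖)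
    {x y : E} (hx : x ∈ X) (hy : y ∈ X) :
    f y ≤ f x + inner ℝ (gradient f x) (y - x) + L / 2 * ‖y - x‖ ^ 2 := by
  set d := y - x with hd
  have hmem : ∀ t ∈ Set.Icc (0 : ℝ) 1, x + t • d ∈ X := fun t ht =>
    hX.add_smul_sub_mem hx hy ht
  have hder : ∀ t ∈ Set.Icc (0 : ℝ) 1, HasDerivAt
      (fun t : ℝ => f (x + t • d) - t * inner ℝ (gradient f x) d - L / 2 * ‖d‖ ^ 2 * t ^ 2)
      (inner ℝ (gradient f (x + t • d)) d - inner ℝ (gradient f x) d - L * ‖d‖ ^ 2 * t) t := by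
    intro t ht
    have h1 : HasDerivAt (fun t : ℝ => x + t • d) d t := by
      simpa using ((hasDerivAt_id t).smul_const d).const_add x
    have h2 := (hdiff _ (hmem t ht)).hasGradientAt.hasFDerivAt.comp_hasDerivAt t h1
    have h3 := (hasDerivAt_id t).mul_const (inner ℝ (gradient f x) d)
    have h4 := (hasDerivAt_pow 2 t).const_mul (L / 2 * ‖d‖ ^ 2)
    refine ((h2.sub h3).sub h4).congr_deriv ?_
    simp
    ring
  have hanti := antitoneOn_of_deriv_nonpos (convex_Icc (0 : ℝ) 1)
    (fun t ht => (hder t ht).continuousAt.continuousWithinAt)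
    (fun t ht => (hder t (interior_subset ht)).differentiableAt.differentiableWithinAt)
    (fun t ht => by
      have ht' := interior_subset ht
      rw [(hder t ht').deriv, ← inner_sub_left]
      have h1 := real_inner_le_norm (gradient f (x + t • d) - gradient f x) d
      have h2 := hLip _ (hmem t ht') _ hx
      rw [add_sub_cancel_left, norm_smul, Real.norm_of_nonneg ht'.1] at h2
      have h3 := mul_le_mul_of_nonneg_right h2 (norm_nonneg d)
      nlinarith)
  have := hanti (Set.left_mem_Icc.2 zero_le_one) (Set.right_mem_Icc.2 zero_le_one) zero_le_one
  have hxd : x + d = y := by rw [hd]; abel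
  simp only [one_smul, zero_smul, add_zero, hxd] at this
  linarith

end Aux

/-- One-step descent inequality for the inexact projected gradient method on
a compact convex set, for an `L`-smooth objective `V_α`:
`V_α(x_{k+1}) ≤ V_α(x_k) − (1 − Lγ_k)(γ_k/4)‖G_{1/γ_0}(x_k)‖² + (1 − Lγ_k/2)γ_k‖e_k‖²`,
where `G_β(z) = β(z − Π_X[z − β⁻¹∇V_α(z)])` is the projected-gradient residual map. -/
theorem inexact_projected_gradient_descent_inequality
    {n : ℕ}
    (X : Set (EuclideanSpace ℝ (Fin n)))
    (hXne : X.Nonempty) (hXcpt : IsCompact X) (hXcvx : Convex ℝ X)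
    -- `proj` is the Euclidean projection onto `X`
    (proj : EuclideanSpace ℝ (Fin n) → EuclideanSpace ℝ (Fin n))
    (hproj : ∀ z, proj z ∈ X ∧ ∀ w ∈ X, ‖z - proj z‖ ≤ ‖z - w‖)
    (Vα : EuclideanSpace ℝ (Fin n) → ℝ)
    (L : ℝ) (hL : 0 < L)
    -- `V_α` is differentiable with `L`-Lipschitz gradient on `X`
    (hdiff : ∀ z ∈ X, DifferentiableAt ℝ Vα z)
    (hLip : ∀ u ∈ X, ∀ v ∈ X, ‖gradient Vα u - gradient Vα v‖ ≤ L * ‖u - v‖)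
    -- the iterates and the stepsizes
    (x e : ℕ → EuclideanSpace ℝ (Fin n)) (γ : ℕ → ℝ)
    (hx0 : x 0 ∈ X)
    (hrec : ∀ k, x (k + 1) = proj (x k - γ k • (gradient Vα (x k) + e k)))
    (hγpos : ∀ k, 0 < γ k)
    (hγmono : ∀ k, γ (k + 1) ≤ γ k)
    (hγ0 : γ 0 < 1 / L) :
    ∀ k, Vα (x (k + 1)) ≤ Vα (x k)
      - (1 - L * γ k) * (γ k / 4) *
          ‖(γ 0)⁻¹ • (x k - proj (x k - γ 0 • gradient Vα (x k)))‖ ^ 2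
      + (1 - L * γ k / 2) * γ k * ‖e k‖ ^ 2 := by
  intro k
  have hxmem : x k ∈ X := by
    cases k with
    | zero => exact hx0
    | succ k => rw [hrec]; exact (hproj _).1
  have hγk : γ k ≤ γ 0 := antitone_nat_of_succ_le hγmono (Nat.zero_le k)
  have hk := hγpos k
  have h0 := hγpos 0
  have hl : L * γ k < 1 := by
    have := (lt_div_iff₀ hL).1 hγ0
    nlinarith
  have hymem : x (k + 1) ∈ X := by rw [hrec]; exact (hproj _).1
  have hdesc := smooth_descent hXcvx hdiff hLip hxmem hymem
  have hvar := proj_variational hXcvx (hproj (x k - γ k • (gradient Vα (x k) + e k))).1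
    (hproj _).2 hxmem
  have hne := proj_nonexpansive hXcvx hproj (x k - γ k • (gradient Vα (x k) + e k))
    (x k - γ k • gradient Vα (x k))
  have hmono := residual_mono hXcvx hproj (x k) (gradient Vα (x k)) hk hγk
  rw [← hrec] at hvar hne
  rw [norm_smul, Real.norm_of_nonneg (inv_pos.2 h0).le]
  generalize gradient Vα (x k) = g at *
  generalize x k - proj (x k - γ 0 • g) = R at *
  generalize hD : proj (x k - γ k • g) = p at *
  obtain ⟨d, hd⟩ : ∃ d, d = x (k + 1) - x k := ⟨_, rfl⟩
  have hvar' : ‖d‖ ^ 2 + γ k * (inner ℝ g d + inner ℝ (e k) d) ≤ 0 := by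
    have e1 : x k - γ k • (g + e k) - x (k + 1) = -(d + γ k • (g + e k)) := by rw [hd]; abel
    have e2 : x k - x (k + 1) = -d := by rw [hd]; abel
    rw [e1, e2, inner_neg_neg, inner_add_left, inner_smul_left, inner_add_left,
      real_inner_self_eq_norm_sq] at hvar
    simpa using hvar
  have hne' : ‖x k - p‖ ≤ ‖d‖ + γ k * ‖e k‖ := by
    have e1 : x k - γ k • (g + e k) - (x k - γ k • g) = -(γ k • e k) := by
      rw [smul_add]; abel
    rw [e1, norm_neg, norm_smul, Real.norm_of_nonneg hk.le] at hne
    have e2 : x k - p = -d + (x (k + 1) - p) := by rw [hd]; abel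
    rw [e2]
    refine (norm_add_le _ _).trans ?_
    rw [norm_neg]
    linarith
  rw [← hd] at hdesc
  -- Scaling by the stepsize, `s = ‖d‖ / γ_k` and `r` is the residual at stepsize `γ_0`.
  obtain ⟨s, hs⟩ : ∃ s, s = ‖d‖ / γ k := ⟨_, rfl⟩
  obtain ⟨r, hr⟩ : ∃ r, r = (γ 0)⁻¹ * ‖R‖ := ⟨_, rfl⟩
  have hsd : ‖d‖ = γ k * s := by rw [hs]; field_simp
  have hrR : ‖R‖ = γ 0 * r := by rw [hr]; field_simp
  have hr0 : 0 ≤ r := by rw [hr]; positivity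
  have hrs : r ≤ s + ‖e k‖ := by
    have h1 : γ 0 * (γ k * r) ≤ γ 0 * (γ k * (s + ‖e k‖)) := by
      rw [hrR] at hmono
      rw [hsd] at hne'
      have := mul_le_mul_of_nonneg_left hne' h0.le
      linarith
    exact le_of_mul_le_mul_left (le_of_mul_le_mul_left h1 h0) hk
  have hrsq : r ^ 2 ≤ 2 * s ^ 2 + 2 * ‖e k‖ ^ 2 := by
    have := pow_le_pow_left₀ hr0 hrs 2
    nlinarith [sq_nonneg (s - ‖e k‖)]
  have hcs : -inner ℝ (e k) d ≤ γ k * (s ^ 2 + ‖e k‖ ^ 2) / 2 := by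
    have h1 := (neg_le_abs _).trans (abs_real_inner_le_norm (e k) d)
    rw [hsd] at h1
    nlinarith [mul_nonneg hk.le (sq_nonneg (s - ‖e k‖))]
  have hgd : inner ℝ g d ≤ -γ k * s ^ 2 - inner ℝ (e k) d := by
    rw [hsd] at hvar'
    have : γ k * (γ k * s ^ 2 + (inner ℝ g d + inner ℝ (e k) d)) ≤ γ k * 0 := by linarith
    have := le_of_mul_le_mul_left this hk
    linarith
  rw [← hr]
  rw [hsd] at hdesc
  have hfin := mul_le_mul_of_nonneg_left hrsq
    (mul_nonneg (sub_nonneg.2 hl.le) (by positivity : 0 ≤ γ k / 4))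
  nlinarith
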